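/- Let K be a field. The K-bilinear extension of the planar shuffle product ⧢ makes the free K-module on PRT' into a commutative, associative, unital K-algebra whose unit is the empty tree 1 (i.e., 1 ⧢ f = f for all f). -/

import Mathlib

inductive PTree : Type where
  | node : List PTree → PTree

namespace PTree

/-- the single-vertex tree -/
def x : PTree := node []

/-- the number of leaves of a tree -/
def deg : PTree → ℕ
  | node l => max 1 (l.attach.map fun t => deg t.1).sum
decreasing_by
  have := List.sizeOf_lt_of_mem t.2
  simp; omega

/-- a tree is reduced if no vertex has arity 1 -/
inductive Reduced : PTree → Prop where
  | node (l : List PTree) (hlen : l.length ≠ 1) (h : ∀ t ∈ l, Reduced t) :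
      Reduced (node l)

/-- the reduction of a tree -/
def red : PTree → PTree
  | node [t] => red t
  | node l => node (l.attach.map fun t => red t.1)
decreasing_by
  · simp; omega
  · have := List.sizeOf_lt_of_mem t.2
    simp; omega

mutual
/-- the spanning subtree `T_I` determined by a set `I ⊆ range (deg T)` of leaf positions
(counted from the left, starting at `0`) -/
def sub : PTree → Finset ℕ → PTree
  | node l, I => node (subList l I)
/-- auxiliary: the list of spanning subtrees of the children, children without
selected leaves being dropped -/
def subList : List PTree → Finset ℕ → List PTree
  | [], _ => []
  | t :: ts, I =>
      (if (I.filter (· < t.deg)).Nonempty then [sub t (I.filter (· < t.deg))] else [])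
        ++ subList ts ((I.filter fun j => t.deg ≤ j).image fun j => j - t.deg)
end

/-- the contraction `T|I`: the reduction of the spanning subtree, `1` (i.e. `none`) if `I = ∅` -/
def contract (T : PTree) (I : Finset ℕ) : Option PTree :=
  if I = ∅ then none else some (red (sub T I))

end PTree

/-- `PRT'`: finite planar rooted trees together with the empty tree `1 = none` -/
abbrev OT := Option PTree

/-- `deg` on `PRT'` -/
def degO (o : OT) : ℕ := o.elim 0 PTree.deg

/-- membership in `PRT'` = reduced trees together with the empty tree `1` -/
def ROT (o : OT) : Prop := ∀ t, o = some t → t.Reduced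

/-- contraction on `PRT'` -/
def contractO : OT → Finset ℕ → OT
  | none, _ => none
  | some t, I => PTree.contract t I

open Classical in
/-- `N_{S,T}(V)` as a finite set of subsets of the set of leaf positions of `V` -/
noncomputable def NFinset (S T V : OT) : Finset (Finset ℕ) :=
  (Finset.range (degO V)).powerset.filter fun I =>
    contractO V I = S ∧ contractO V (Finset.range (degO V) \ I) = T

/-- `#N_{S,T}(V)` -/
noncomputable def Ncount (S T V : OT) : ℕ := (NFinset S T V).card

/-- the free `K`-module on `PRT'` (realized inside the free module on all of `Option PTree`;
the elements of the free module on `PRT'` are those whose support satisfies `ROT`) -/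
abbrev AMod (K : Type) [Field K] := OT →₀ K

/-- `f` belongs to the free `K`-module on `PRT'` -/
def suppRed (K : Type) [Field K] (f : AMod K) : Prop := ∀ t ∈ f.support, ROT t

/-- the planar shuffle product `S ⧢ T = Σ_{V ∈ PRT'} #N_{S,T}(V)·V` of two monomials -/
noncomputable def shuffleM (K : Type) [Field K] (S T : OT) : AMod K :=
  ∑ᶠ (V : OT) (_ : ROT V), Finsupp.single V ((Ncount S T V : K))

/-- the `K`-bilinear extension of the planar shuffle product -/
noncomputable def shuffleF (K : Type) [Field K] (f g : AMod K) : AMod K :=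
  f.sum fun S a => g.sum fun T b => (a * b) • shuffleM K S T

/-- tensor-like product of a list of module elements, as a finitely supported
function on lists of basis elements -/
noncomputable def listProd (K : Type) [Field K] {σ : Type} : List (σ →₀ K) → (List σ →₀ K)
  | [] => Finsupp.single [] 1
  | f :: fs => f.sum fun t a => (listProd K fs).sum fun ts b => Finsupp.single (t :: ts) (a * b)

/-- the `K`-multilinear extension of an operation on basis elements -/
noncomputable def mulExt (K : Type) [Field K] {σ τ : Type} (op : List σ → τ)
    (l : List (σ →₀ K)) : τ →₀ K :=
  (listProd K l).sum fun ts c => Finsupp.single (op ts) c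

/-- `gr` : delete all entries equal to `1`, then return `1` if no entry remains,
the unique entry if exactly one remains, and the grafting `node` otherwise -/
def grO (ts : List OT) : OT :=
  match ts.reduceOption with
  | [] => none
  | [t] => some t
  | l => some (PTree.node l)

/-- the `K`-multilinear extension of `gr` -/
noncomputable def grF (K : Type) [Field K] (l : List (AMod K)) : AMod K := mulExt K grO l

/-- the `K`-multilinear extension of the grafting `node` (junk value `0` on lists
containing the empty tree `1`, which never occurs in its uses here) -/
noncomputable def nodeF (K : Type) [Field K] (l : List (AMod K)) : AMod K :=
  (listProd K l).sum fun ts c =>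
    match (ts.mapM (id : Option PTree → Option PTree) : Option (List PTree)) with
    | some l' => Finsupp.single (some (PTree.node l')) c
    | none => 0

namespace PTree

def sdeg (l : List PTree) : ℕ := (l.map deg).sum

@[simp] lemma sdeg_nil : sdeg [] = 0 := rfl
@[simp] lemma sdeg_cons (t : PTree) (l : List PTree) : sdeg (t :: l) = t.deg + sdeg l := by
  simp [sdeg]

lemma deg_node (l : List PTree) : deg (node l) = max 1 (sdeg l) := by
  rw [deg, sdeg]; simp

lemma deg_pos (t : PTree) : 1 ≤ deg t := by
  cases t with
  | node l => rw [deg_node]; exact le_max_left _ _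

lemma deg_node_of_ne (l : List PTree) (h : l ≠ []) : deg (node l) = sdeg l := by
  rw [deg_node]
  cases l with
  | nil => exact absurd rfl h
  | cons t ts =>
    have := deg_pos t
    simp; omega

lemma red_single (t : PTree) : red (node [t]) = red t := by
  rw [red]

lemma red_node (l : List PTree) (h : l.length ≠ 1) : red (node l) = node (l.map red) := by
  rw [red]
  · simp
  · rintro t rfl
    simp at h

lemma ind {P : PTree → Prop} (h : ∀ l : List PTree, (∀ t ∈ l, P t) → P (node l)) (t : PTree) :
    P t := by
  match t with
  | node l =>
    exact h l (fun s hs => ind h s)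
termination_by sizeOf t
decreasing_by
  have := List.sizeOf_lt_of_mem hs
  simp; omega

lemma red_reduced (t : PTree) : (red t).Reduced := by
  induction t using ind with
  | h l ih =>
    by_cases hl : l.length = 1
    · obtain ⟨t, rfl⟩ := List.length_eq_one_iff.1 hl
      rw [red_single]; exact ih t (by simp)
    · rw [red_node l hl]
      refine Reduced.node _ (by simpa using hl) ?_
      simpa using ih

/-- lower part of a leaf set -/
def lo (n : ℕ) (I : Finset ℕ) : Finset ℕ := I.filter (· < n)
/-- upper part, shifted -/
def hi (n : ℕ) (I : Finset ℕ) : Finset ℕ := (I.filter fun j => n ≤ j).image fun j => j - n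

@[simp] lemma mem_lo {n : ℕ} {I : Finset ℕ} {j : ℕ} : j ∈ lo n I ↔ j ∈ I ∧ j < n := by simp [lo]
@[simp] lemma mem_hi {n : ℕ} {I : Finset ℕ} {j : ℕ} : j ∈ hi n I ↔ n + j ∈ I := by
  simp only [hi, Finset.mem_image, Finset.mem_filter]
  constructor
  · rintro ⟨a, ⟨h1, h2⟩, rfl⟩
    rwa [Nat.add_sub_cancel' h2]
  · intro h
    exact ⟨n + j, ⟨h, by omega⟩, by omega⟩

def gr : List PTree → OT
  | [] => none
  | [t] => some t
  | l => some (node l)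

def cl (l : List PTree) (I : Finset ℕ) : List PTree := (subList l I).map red

lemma contract_empty (t : PTree) : contract t ∅ = none := by simp [contract]
lemma contract_ne (t : PTree) {I : Finset ℕ} (h : I ≠ ∅) : contract t I = some (red (sub t I)) := by
  simp [contract, h]

@[simp] lemma cl_nil (I : Finset ℕ) : cl [] I = [] := by simp [cl, subList]

lemma cl_cons (t : PTree) (ts : List PTree) (I : Finset ℕ) :
    cl (t :: ts) I = (contract t (lo t.deg I)).toList ++ cl ts (hi t.deg I) := by
  rw [cl, subList, List.map_append]
  congr 1
  change List.map red (if (lo t.deg I).Nonempty then [sub t (lo t.deg I)] else []) = _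
  split_ifs with h
  · rw [contract_ne t h.ne_empty]; simp
  · rw [Finset.not_nonempty_iff_eq_empty] at h
    rw [h, contract_empty]; simp

lemma hi_subset {a b : ℕ} {I : Finset ℕ} (h : I ⊆ Finset.range (a + b)) :
    hi a I ⊆ Finset.range b := by
  intro j hj
  have := h (mem_hi.1 hj)
  simp at this ⊢; omega

lemma lo_subset (a : ℕ) (I : Finset ℕ) : lo a I ⊆ Finset.range a := by
  intro j hj
  simp at hj ⊢; omega

lemma card_lo_hi (a : ℕ) (I : Finset ℕ) : (lo a I).card + (hi a I).card = I.card := by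
  rw [lo, hi, Finset.card_image_of_injOn]
  · rw [← Finset.card_filter_add_card_filter_not (s := I) (· < a)]
    simp
  · intro x hx y hy hxy
    simp at hx hy hxy; omega

lemma gr_cl_eq (l : List PTree) (I : Finset ℕ) (hI : I ≠ ∅)
    (h : cl l I ≠ []) : contract (node l) I = gr (cl l I) := by
  rw [contract_ne _ hI, sub]
  unfold cl at *
  generalize subList l I = L at *
  match L with
  | [] => simp at h
  | [t] => simp [red_single, gr]
  | a :: b :: L => rw [red_node _ (by simp)]; simp [gr]

lemma sdeg_append (l l' : List PTree) : sdeg (l ++ l') = sdeg l + sdeg l' := by simp [sdeg]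

lemma sdeg_toList (o : OT) : sdeg o.toList = degO o := by
  cases o <;> simp [degO]

lemma degO_gr (l : List PTree) : degO (gr l) = sdeg l := by
  match l with
  | [] => rfl
  | [t] => simp [gr, degO]
  | a :: b :: l => simp only [gr, degO, Option.elim]; rw [deg_node_of_ne _ (by simp)]

lemma sdeg_cl_of (l : List PTree)
    (ih : ∀ t ∈ l, ∀ I ⊆ Finset.range t.deg, degO (contract t I) = I.card)
    (I : Finset ℕ) (hI : I ⊆ Finset.range (sdeg l)) : sdeg (cl l I) = I.card := by
  induction l generalizing I with
  | nil => simp at hI; simp [hI]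
  | cons t ts ihl =>
    rw [cl_cons, sdeg_append, sdeg_toList, ih t (by simp) _ (lo_subset _ _),
      ihl (fun t ht => ih t (by simp [ht])) _ (hi_subset (by simpa using hI)), card_lo_hi]

lemma deg_contract (t : PTree) : ∀ I ⊆ Finset.range t.deg, degO (contract t I) = I.card := by
  induction t using ind with
  | h l ih =>
    intro I hI
    by_cases h0 : I = ∅
    · subst h0; simp [contract_empty, degO]
    by_cases hl : l = []
    · subst hl
      have hd : deg (node []) = 1 := by simp [deg_node]
      rw [hd] at hI
      have : I = {0} := by
        rcases Finset.subset_singleton_iff.1 (by simpa using hI) with h | h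
        · exact absurd h h0
        · exact h
      rw [contract_ne _ h0, sub, subList, red_node _ (by simp)]
      simp [degO, deg_node, this]
    · rw [deg_node_of_ne l hl] at hI
      have hs := sdeg_cl_of l ih I hI
      rw [gr_cl_eq l I h0, degO_gr, hs]
      intro h
      rw [h] at hs
      simp at hs
      exact h0 (Finset.card_eq_zero.1 hs.symm)

lemma sdeg_cl (l : List PTree) (I : Finset ℕ) (hI : I ⊆ Finset.range (sdeg l)) :
    sdeg (cl l I) = I.card := sdeg_cl_of l (fun t _ => deg_contract t) I hI

lemma cl_empty (l : List PTree) : cl l ∅ = [] := by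
  have h := sdeg_cl l ∅ (by simp)
  cases hc : cl l ∅ with
  | nil => rfl
  | cons a b =>
    have := deg_pos a
    rw [hc] at h; simp at h; omega

lemma cl_ne (l : List PTree) {I : Finset ℕ} (hI : I ⊆ Finset.range (sdeg l)) (h0 : I ≠ ∅) :
    cl l I ≠ [] := by
  intro h
  have h' := sdeg_cl l I hI
  rw [h] at h'
  exact h0 (by simpa using h'.symm)

lemma contract_node (l : List PTree) (hl : l ≠ []) (I : Finset ℕ)
    (hI : I ⊆ Finset.range (sdeg l)) : contract (node l) I = gr (cl l I) := by
  by_cases h0 : I = ∅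
  · subst h0; simp [contract_empty, cl_empty, gr]
  · exact gr_cl_eq l I h0 (cl_ne l hI h0)

lemma lo_self {n : ℕ} {I : Finset ℕ} (h : I ⊆ Finset.range n) : lo n I = I := by
  ext j
  have := @h j
  simp at this ⊢
  exact this

lemma contractO_gr (l : List PTree) (I : Finset ℕ)
    (hI : I ⊆ Finset.range (sdeg l)) : contractO (gr l) I = gr (cl l I) := by
  match l with
  | [] => simp [gr, contractO]
  | [t] =>
    simp at hI
    simp only [gr, contractO, cl_cons, cl_nil, List.append_nil, lo_self hI]
    cases contract t I <;> simp [gr]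
  | a :: b :: l => simp only [gr, contractO]; exact contract_node _ (by simp) _ hI

lemma contractO_reduced (V : OT) (I : Finset ℕ) : ROT (contractO V I) := by
  intro t ht
  cases V with
  | none => simp [contractO] at ht
  | some v =>
    simp only [contractO, contract] at ht
    split_ifs at ht
    simp at ht
    rw [← ht]; exact red_reduced _

/-- relative positions of `A` inside `I` -/
def rk (I A : Finset ℕ) : Finset ℕ := A.image (Nat.count (· ∈ I))

lemma count_eq (I : Finset ℕ) (n : ℕ) : Nat.count (· ∈ I) n = (lo n I).card := by
  rw [Nat.count_eq_card_filter_range]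
  congr 1
  ext j; simp [and_comm]

lemma count_inj {I : Finset ℕ} {a b : ℕ} (ha : a ∈ I) (hb : b ∈ I)
    (h : Nat.count (· ∈ I) a = Nat.count (· ∈ I) b) : a = b :=
  Nat.count_injective ha hb h

lemma count_lo (I : Finset ℕ) {a n : ℕ} (h : a ≤ n) :
    Nat.count (· ∈ lo n I) a = Nat.count (· ∈ I) a := by
  rw [count_eq, count_eq]; congr 1; ext j; simp; omega

lemma count_hi (I : Finset ℕ) (a n : ℕ) :
    Nat.count (· ∈ I) (n + a) = (lo n I).card + Nat.count (· ∈ hi n I) a := by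
  rw [Nat.count_add, ← count_eq]
  congr 1
  simp only [mem_hi]

lemma count_lt_card_lo {I : Finset ℕ} {a n : ℕ} (ha : a ∈ I) :
    Nat.count (· ∈ I) a < (lo n I).card ↔ a < n := by
  constructor
  · intro h
    by_contra hn
    rw [← count_eq] at h
    exact absurd (Nat.count_monotone (· ∈ I) (not_lt.1 hn)) (not_le.2 h)
  · intro h
    rw [← count_eq]
    exact Nat.count_strict_mono ha h

lemma lo_rk {I A : Finset ℕ} (h : A ⊆ I) (n : ℕ) :
    lo (lo n I).card (rk I A) = rk (lo n I) (lo n A) := by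
  ext j
  simp only [mem_lo, rk, Finset.mem_image]
  constructor
  · rintro ⟨⟨a, ha, rfl⟩, h2⟩
    rw [count_lt_card_lo (h ha)] at h2
    exact ⟨a, ⟨ha, h2⟩, by rw [← count_lo I h2.le]; simp⟩
  · rintro ⟨a, ⟨ha, h2⟩, rfl⟩
    have e : Nat.count (fun x => x ∈ I ∧ x < n) a = Nat.count (· ∈ I) a := by
      rw [← count_lo I h2.le]; simp
    rw [e]
    exact ⟨⟨a, ha, rfl⟩, (count_lt_card_lo (h ha)).2 h2⟩

lemma hi_rk {I A : Finset ℕ} (h : A ⊆ I) (n : ℕ) :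
    hi (lo n I).card (rk I A) = rk (hi n I) (hi n A) := by
  ext j
  rw [mem_hi]
  unfold rk
  rw [Finset.mem_image, Finset.mem_image]
  constructor
  · rintro ⟨a, ha, e⟩
    have : ¬ a < n := by
      rw [← count_lt_card_lo (h ha), e]; omega
    obtain ⟨b, rfl⟩ := Nat.exists_eq_add_of_le (not_lt.1 this)
    refine ⟨b, mem_hi.2 ha, ?_⟩
    rw [count_hi] at e; omega
  · rintro ⟨b, hb, e⟩
    exact ⟨n + b, mem_hi.1 hb, by rw [count_hi, e]⟩

lemma rk_self (I : Finset ℕ) : rk I I = Finset.range I.card := by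
  apply Finset.eq_of_subset_of_card_le
  · intro j hj
    obtain ⟨a, ha, rfl⟩ := Finset.mem_image.1 hj
    have h1 : lo (a+1) I ⊆ I := by intro j; simp; tauto
    have := (count_lt_card_lo (n := a + 1) ha).2 (by omega)
    exact Finset.mem_range.2 (this.trans_le (Finset.card_le_card h1))
  · rw [rk, Finset.card_image_of_injOn, Finset.card_range]
    intro a ha b hb
    exact count_inj ha hb

lemma rk_subset {I A : Finset ℕ} (h : A ⊆ I) : rk I A ⊆ Finset.range I.card := by
  rw [← rk_self]; exact Finset.image_subset_image h

lemma rk_sdiff {I A : Finset ℕ} (h : A ⊆ I) :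
    Finset.range I.card \ rk I A = rk I (I \ A) := by
  rw [← rk_self]
  unfold rk
  rw [Finset.image_sdiff_of_injOn]
  · intro a ha b hb
    exact count_inj ha hb
  · exact h

lemma rk_inj {I A B : Finset ℕ} (hA : A ⊆ I) (hB : B ⊆ I) (h : rk I A = rk I B) : A = B := by
  have key : ∀ A B : Finset ℕ, A ⊆ I → B ⊆ I → rk I A = rk I B → A ⊆ B := by
    intro A B hA hB h a ha
    have : Nat.count (· ∈ I) a ∈ rk I B := h ▸ Finset.mem_image_of_mem _ ha
    obtain ⟨b, hb, e⟩ := Finset.mem_image.1 this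
    rwa [← count_inj (hB hb) (hA ha) e]
  exact (key A B hA hB h).antisymm (key B A hB hA h.symm)

lemma rk_surj {I J : Finset ℕ} (h : J ⊆ Finset.range I.card) : ∃ A ⊆ I, rk I A = J := by
  rw [← rk_self, rk] at h
  obtain ⟨A, hA, rfl⟩ := Finset.subset_image_iff.1 h
  exact ⟨A, by simpa using hA, rfl⟩

lemma lo_mono {A I : Finset ℕ} (h : A ⊆ I) (n : ℕ) : lo n A ⊆ lo n I := by
  intro j hj; simp at hj ⊢; exact ⟨h hj.1, hj.2⟩
lemma hi_mono {A I : Finset ℕ} (h : A ⊆ I) (n : ℕ) : hi n A ⊆ hi n I := by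
  intro j hj; rw [mem_hi] at hj ⊢; exact h hj

lemma cl_append (o : OT) (L : List PTree) (J : Finset ℕ) :
    cl (o.toList ++ L) J = (contractO o (lo (degO o) J)).toList ++ cl L (hi (degO o) J) := by
  cases o with
  | none =>
    have : hi 0 J = J := by ext j; simp
    simp [contractO, degO, this]
  | some t => simp [contractO, degO, cl_cons]

lemma cl_cl_of (l : List PTree)
    (ih : ∀ t ∈ l, ∀ I ⊆ Finset.range t.deg, ∀ A ⊆ I,
      contractO (contract t I) (rk I A) = contract t A)
    (I : Finset ℕ) (hI : I ⊆ Finset.range (sdeg l)) (A : Finset ℕ) (hA : A ⊆ I) :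
    cl (cl l I) (rk I A) = cl l A := by
  induction l generalizing I A with
  | nil => simp
  | cons t ts ihl =>
    rw [cl_cons, cl_cons, cl_append, deg_contract _ _ (lo_subset _ _), lo_rk hA, hi_rk hA,
      ih t (by simp) _ (lo_subset _ _) _ (lo_mono hA _),
      ihl (fun t ht => ih t (by simp [ht])) _ (hi_subset (by simpa using hI)) _ (hi_mono hA _)]

lemma contract_contract (t : PTree) : ∀ I ⊆ Finset.range t.deg, ∀ A ⊆ I,
    contractO (contract t I) (rk I A) = contract t A := by
  induction t using ind with
  | h l ih =>
    intro I hI A hA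
    by_cases h0 : A = ∅
    · subst h0
      rw [contract_empty]
      cases contract (node l) I <;> simp [contractO, rk, contract_empty]
    have hI0 : I ≠ ∅ := by rintro rfl; exact h0 (by simpa using hA)
    have hr0 : rk I A ≠ ∅ := by simpa [rk] using h0
    by_cases hl : l = []
    · subst hl
      have key : ∀ J : Finset ℕ, J ≠ ∅ → contract (node []) J = some (node []) := by
        intro J hJ
        rw [contract_ne _ hJ, sub, subList, red_node _ (by simp)]; simp
      rw [key I hI0, key A h0]
      exact key _ hr0
    · rw [deg_node_of_ne l hl] at hI
      rw [contract_node l hl I hI, contract_node l hl A (hA.trans hI), contractO_gr,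
        cl_cl_of l ih I hI A hA]
      rw [sdeg_cl l I hI]
      exact rk_subset hA

lemma contract_full_list (l : List PTree)
    (ih : ∀ t ∈ l, contract t (Finset.range t.deg) = some t) :
    cl l (Finset.range (sdeg l)) = l := by
  induction l with
  | nil => simp
  | cons t ts ihl =>
    have h1 : lo t.deg (Finset.range (sdeg (t :: ts))) = Finset.range t.deg := by
      ext j; simp; omega
    have h2 : hi t.deg (Finset.range (sdeg (t :: ts))) = Finset.range (sdeg ts) := by
      ext j; simp
    rw [cl_cons, h1, h2, ih t (by simp), ihl (fun t ht => ih t (by simp [ht]))]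
    simp

lemma contract_full (t : PTree) (ht : t.Reduced) :
    contract t (Finset.range t.deg) = some t := by
  induction t using ind with
  | h l ih =>
    cases ht with
    | node _ hlen h =>
      by_cases hl : l = []
      · subst hl
        rw [contract_ne _ (by simp [deg_node]), sub, subList, red_node _ (by simp)]; simp
      · rw [deg_node_of_ne l hl, contract_node l hl _ subset_rfl,
          contract_full_list l (fun t ht => ih t ht (h t ht))]
        match l with
        | [] => simp at hl
        | [t] => simp at hlen
        | a :: b :: l => rfl

lemma finite_lists {α : Type} (s : Set α) (hs : s.Finite) (n : ℕ) :
    {l : List α | l.length ≤ n ∧ ∀ t ∈ l, t ∈ s}.Finite := by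
  induction n with
  | zero =>
    refine (Set.finite_singleton []).subset ?_
    rintro l ⟨h, -⟩
    simpa using h
  | succ n ih =>
    refine ((Set.finite_singleton []).union (Set.Finite.image2 List.cons hs ih)).subset ?_
    rintro l ⟨h, h'⟩
    cases l with
    | nil => simp
    | cons a l =>
      right
      refine ⟨a, h' a (by simp), l, ⟨by simpa using h, fun t ht => h' t (by simp [ht])⟩, rfl⟩

lemma length_le_sdeg (l : List PTree) : l.length ≤ sdeg l := by
  induction l with
  | nil => simp
  | cons t ts ih => have := deg_pos t; simp; omega

lemma deg_lt_of_mem (l : List PTree) (hl : 2 ≤ l.length) (t : PTree) (ht : t ∈ l) :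
    deg t < sdeg l := by
  obtain ⟨a, b, rfl⟩ := List.append_of_mem ht
  have h1 := length_le_sdeg a
  have h2 := length_le_sdeg b
  simp [sdeg_append] at hl ⊢
  omega

lemma finite_reduced (n : ℕ) : {t : PTree | t.Reduced ∧ t.deg ≤ n}.Finite := by
  induction n with
  | zero =>
    refine Set.finite_empty.subset ?_
    rintro t ⟨-, h⟩
    have := deg_pos t
    omega
  | succ n ih =>
    refine ((finite_lists _ ih (n + 1)).image node).subset ?_
    rintro t ⟨hr, hd⟩
    cases hr with
    | node l hlen h =>
      refine ⟨l, ?_, rfl⟩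
      by_cases hl : l = []
      · subst hl; simp
      rw [deg_node_of_ne l hl] at hd
      refine ⟨(length_le_sdeg l).trans hd, fun t ht => ⟨h t ht, ?_⟩⟩
      have h2 : 2 ≤ l.length := by
        have := List.length_pos_iff.2 hl
        omega
      have := deg_lt_of_mem l h2 t ht
      omega

end PTree

open PTree

lemma degO_contractO (V : OT) (I : Finset ℕ) (hI : I ⊆ Finset.range (degO V)) :
    degO (contractO V I) = I.card := by
  cases V with
  | none => simp [degO] at hI; simp [contractO, degO, hI]
  | some t => exact deg_contract t I hI

lemma contractO_contractO (V : OT) (I : Finset ℕ) (hI : I ⊆ Finset.range (degO V))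
    (A : Finset ℕ) (hA : A ⊆ I) : contractO (contractO V I) (rk I A) = contractO V A := by
  cases V with
  | none => simp [contractO]
  | some t => exact contract_contract t I hI A hA

lemma contractO_full (V : OT) (hV : ROT V) : contractO V (Finset.range (degO V)) = V := by
  cases V with
  | none => rfl
  | some t => exact contract_full t (hV t rfl)

lemma mem_NFinset {S T V : OT} {I : Finset ℕ} : I ∈ NFinset S T V ↔
    I ⊆ Finset.range (degO V) ∧ contractO V I = S ∧
      contractO V (Finset.range (degO V) \ I) = T := by
  simp [NFinset]

lemma Ncount_comm (S T V : OT) : Ncount S T V = Ncount T S V := by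
  have key : ∀ S T : OT, ∀ I ∈ NFinset S T V,
      Finset.range (degO V) \ I ∈ NFinset T S V := by
    intro S T I hI
    rw [mem_NFinset] at hI ⊢
    obtain ⟨h1, h2, h3⟩ := hI
    exact ⟨Finset.sdiff_subset, h3, by rwa [Finset.sdiff_sdiff_eq_self h1]⟩
  refine Finset.card_nbij' (fun I => Finset.range (degO V) \ I)
    (fun I => Finset.range (degO V) \ I) (key S T) (key T S) ?_ ?_
  · intro I hI
    exact Finset.sdiff_sdiff_eq_self (mem_NFinset.1 hI).1
  · intro I hI
    exact Finset.sdiff_sdiff_eq_self (mem_NFinset.1 hI).1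

lemma Ncount_deg {S T V : OT} (h : Ncount S T V ≠ 0) : degO V = degO S + degO T := by
  obtain ⟨I, hI⟩ := Finset.card_ne_zero.1 h
  obtain ⟨h1, rfl, rfl⟩ := mem_NFinset.1 hI
  rw [degO_contractO V I h1, degO_contractO V _ Finset.sdiff_subset,
    Finset.card_sdiff_of_subset h1]
  have := Finset.card_le_card h1
  simp at this ⊢
  omega

lemma finite_N (S T : OT) : {V : OT | ROT V ∧ Ncount S T V ≠ 0}.Finite := by
  refine ((Set.finite_singleton none).union
    ((finite_reduced (degO S + degO T)).image some)).subset ?_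
  rintro V ⟨h1, h2⟩
  have := Ncount_deg h2
  cases V with
  | none => simp
  | some t => right; exact ⟨t, ⟨h1 t rfl, this.le⟩, rfl⟩

open Classical in
lemma shuffleM_apply (K : Type) [Field K] (S T V : OT) :
    shuffleM K S T V = if ROT V then (Ncount S T V : K) else 0 := by
  rw [shuffleM, finsum_eq_sum_of_support_subset (s := (finite_N S T).toFinset)]
  · simp only [finsum_eq_if, Finsupp.finsetSum_apply]
    rw [Finset.sum_congr rfl (g := fun W =>
      if W = V then (if ROT V then (Ncount S T V : K) else 0) else 0)]
    · rw [Finset.sum_ite_eq']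
      split_ifs with h1 h2 h2
      · rfl
      · rfl
      · simp [h2] at h1; simp [h1]
      · rfl
    · intro W _
      by_cases h : W = V
      · subst h; simp only [if_true]; split_ifs <;> simp
      · rw [if_neg h]; split_ifs <;> simp [h]
  · intro V hV
    simp only [finsum_eq_if, Function.mem_support] at hV
    simp only [Set.Finite.coe_toFinset, Set.mem_setOf_eq]
    split_ifs at hV with h
    · refine ⟨h, fun h0 => hV ?_⟩
      simp [h0]
    · exact absurd rfl hV

lemma shuffleM_comm (K : Type) [Field K] (S T : OT) : shuffleM K S T = shuffleM K T S := by
  ext V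
  rw [shuffleM_apply, shuffleM_apply, Ncount_comm]

lemma Ncount_none (T V : OT) (hV : ROT V) [Decidable (V = T)] :
    Ncount none T V = if V = T then 1 else 0 := by
  have key : ∀ I, I ⊆ Finset.range (degO V) → contractO V I = none → I = ∅ := by
    intro I h1 h2
    have := degO_contractO V I h1
    rw [h2] at this
    exact Finset.card_eq_zero.1 this.symm
  have h0 : contractO V ∅ = none := by
    cases V with
    | none => rfl
    | some t => exact contract_empty t
  split_ifs with h
  · rw [Ncount, Finset.card_eq_one]
    refine ⟨∅, ?_⟩
    ext I
    rw [mem_NFinset, Finset.mem_singleton]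
    constructor
    · rintro ⟨h1, h2, -⟩
      exact key I h1 h2
    · rintro rfl
      exact ⟨by simp, h0, by rw [Finset.sdiff_empty, contractO_full V hV, h]⟩
  · rw [Ncount, Finset.card_eq_zero, Finset.eq_empty_iff_forall_notMem]
    intro I hI
    obtain ⟨h1, h2, h3⟩ := mem_NFinset.1 hI
    obtain rfl := key I h1 h2
    rw [Finset.sdiff_empty, contractO_full V hV] at h3
    exact h h3

open Classical in
lemma shuffleM_none (K : Type) [Field K] (T : OT) (hT : ROT T) :
    shuffleM K none T = Finsupp.single T 1 := by
  ext V
  rw [shuffleM_apply, Finsupp.single_apply]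
  by_cases hV : ROT V
  · rw [if_pos hV, Ncount_none T V hV]
    by_cases h : V = T
    · simp [h]
    · simp [h, Ne.symm h]
  · rw [if_neg hV, if_neg]
    rintro rfl
    exact hV hT

lemma shuffleF_add_left (K : Type) [Field K] (f f' g : AMod K) :
    shuffleF K (f + f') g = shuffleF K f g + shuffleF K f' g := by
  unfold shuffleF
  rw [Finsupp.sum_add_index']
  · simp
  · intro S a b
    simp only [add_mul, add_smul, Finsupp.sum_add]

lemma shuffleF_smul_left (K : Type) [Field K] (a : K) (f g : AMod K) :
    shuffleF K (a • f) g = a • shuffleF K f g := by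
  unfold shuffleF
  rw [Finsupp.sum_smul_index' (by simp), Finsupp.smul_sum]
  simp only [Finsupp.smul_sum, smul_smul, smul_eq_mul, mul_assoc]

lemma shuffleF_comm (K : Type) [Field K] (f g : AMod K) :
    shuffleF K f g = shuffleF K g f := by
  unfold shuffleF
  rw [Finsupp.sum_comm]
  simp only [mul_comm, shuffleM_comm K]

lemma shuffleF_add_right (K : Type) [Field K] (f g g' : AMod K) :
    shuffleF K f (g + g') = shuffleF K f g + shuffleF K f g' := by
  rw [shuffleF_comm, shuffleF_add_left, shuffleF_comm K g, shuffleF_comm K g']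

lemma shuffleF_smul_right (K : Type) [Field K] (a : K) (f g : AMod K) :
    shuffleF K f (a • g) = a • shuffleF K f g := by
  rw [shuffleF_comm, shuffleF_smul_left, shuffleF_comm K g]

lemma shuffleF_zero_left (K : Type) [Field K] (g : AMod K) : shuffleF K 0 g = 0 := by
  simp [shuffleF]
lemma shuffleF_zero_right (K : Type) [Field K] (g : AMod K) : shuffleF K g 0 = 0 := by
  simp [shuffleF]

lemma shuffleF_single (K : Type) [Field K] (S T : OT) (a b : K) :
    shuffleF K (Finsupp.single S a) (Finsupp.single T b) = (a * b) • shuffleM K S T := by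
  unfold shuffleF
  rw [Finsupp.sum_single_index, Finsupp.sum_single_index] <;> simp

open Classical in
/-- ordered partitions of the leaves into three parts -/
noncomputable def N3 (R S T V : OT) : Finset (Finset ℕ × Finset ℕ) :=
  ((Finset.range (degO V)).powerset ×ˢ (Finset.range (degO V)).powerset).filter fun p =>
    Disjoint p.1 p.2 ∧ contractO V p.1 = R ∧ contractO V p.2 = S ∧
      contractO V (Finset.range (degO V) \ (p.1 ∪ p.2)) = T

lemma mem_N3 {R S T V : OT} {A B : Finset ℕ} : (A, B) ∈ N3 R S T V ↔
    (A ⊆ Finset.range (degO V) ∧ B ⊆ Finset.range (degO V)) ∧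
    Disjoint A B ∧ contractO V A = R ∧ contractO V B = S ∧
      contractO V (Finset.range (degO V) \ (A ∪ B)) = T := by
  simp [N3]

lemma N3_card_le (R S T V : OT) : (N3 R S T V).card ≤ (N3 S T R V).card := by
  refine Finset.card_le_card_of_injOn
    (fun p => (p.2, Finset.range (degO V) \ (p.1 ∪ p.2))) ?_ ?_
  · rintro ⟨A, B⟩ h
    obtain ⟨⟨hA, hB⟩, hd, h1, h2, h3⟩ := mem_N3.1 h
    refine mem_N3.2 ⟨⟨hB, Finset.sdiff_subset⟩, ?_, h2, h3, ?_⟩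
    · rw [Finset.disjoint_left]; intro a ha; simp [ha]
    · rw [← h1]
      congr 1
      ext j
      have e1 := @hA j
      have e2 : j ∈ _ → _ := fun hj => Finset.disjoint_left.1 hd hj
      simp at e1 ⊢
      tauto
  · rintro ⟨A, B⟩ h ⟨A', B'⟩ h' e
    obtain ⟨⟨hA, hB⟩, hd, -⟩ := mem_N3.1 h
    obtain ⟨⟨hA', hB'⟩, hd', -⟩ := mem_N3.1 h'
    simp only [Prod.mk.injEq] at e
    obtain ⟨rfl, e⟩ := e
    congr 1
    ext j
    have e0 := Finset.ext_iff.1 e j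
    have e1 := @hA j
    have e3 := @hA' j
    have e2 : j ∈ _ → _ := fun hj => Finset.disjoint_left.1 hd hj
    have e4 : j ∈ _ → _ := fun hj => Finset.disjoint_left.1 hd' hj
    simp only [Finset.mem_sdiff, Finset.mem_union] at e0
    clear h h' hA hA' hB hB' hd hd' e
    grind

lemma N3_card (R S T V : OT) : (N3 R S T V).card = (N3 S T R V).card :=
  le_antisymm (N3_card_le R S T V) ((N3_card_le S T R V).trans (N3_card_le T R S V))

open Classical in
lemma Ncount_contract (R S V : OT) (I : Finset ℕ) (hI : I ⊆ Finset.range (degO V)) :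
    Ncount R S (contractO V I) =
      (I.powerset.filter fun A => contractO V A = R ∧ contractO V (I \ A) = S).card := by
  symm
  refine Finset.card_bij (fun A _ => rk I A) ?_ ?_ ?_
  · intro A hA
    simp only [Finset.mem_filter, Finset.mem_powerset] at hA
    obtain ⟨hA, h1, h2⟩ := hA
    rw [mem_NFinset, degO_contractO V I hI, rk_sdiff hA, contractO_contractO V I hI A hA,
      contractO_contractO V I hI _ Finset.sdiff_subset]
    exact ⟨rk_subset hA, h1, h2⟩
  · intro A hA B hB h
    simp only [Finset.mem_filter, Finset.mem_powerset] at hA hB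
    exact rk_inj hA.1 hB.1 h
  · intro J hJ
    rw [mem_NFinset, degO_contractO V I hI] at hJ
    obtain ⟨h0, h1, h2⟩ := hJ
    obtain ⟨A, hA, rfl⟩ := rk_surj h0
    rw [rk_sdiff hA, contractO_contractO V I hI _ Finset.sdiff_subset] at h2
    rw [contractO_contractO V I hI A hA] at h1
    exact ⟨A, by simp [hA, h1, h2], rfl⟩

open Classical in
lemma sum_N (R S T V : OT) (F : Finset OT)
    (hF : ∀ I ⊆ Finset.range (degO V), contractO V I ∈ F) :
    ∑ U ∈ F, Ncount R S U * Ncount U T V = (N3 R S T V).card := by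
  have h1 : ∀ U, Ncount R S U * Ncount U T V =
      ∑ I ∈ (Finset.range (degO V)).powerset, if contractO V I = U then
        (if contractO V (Finset.range (degO V) \ I) = T then
          Ncount R S (contractO V I) else 0) else 0 := by
    intro U
    rw [Ncount.eq_1 U T V, NFinset, Finset.card_filter, Finset.mul_sum]
    refine Finset.sum_congr rfl fun I _ => ?_
    by_cases h : contractO V I = U
    · simp [h]
    · simp [h]
  simp_rw [h1]
  rw [Finset.sum_comm]
  have h2 : ∀ I ∈ (Finset.range (degO V)).powerset, (∑ U ∈ F, if contractO V I = U then
        (if contractO V (Finset.range (degO V) \ I) = T then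
          Ncount R S (contractO V I) else 0) else 0) =
      ((I.powerset.filter fun A => contractO V A = R ∧ contractO V (I \ A) = S ∧
        contractO V (Finset.range (degO V) \ I) = T)).card := by
    intro I hI
    rw [Finset.mem_powerset] at hI
    rw [Finset.sum_ite_eq, if_pos (hF I hI)]
    split_ifs with h
    · rw [Ncount_contract R S V I hI]; simp [h]
    · simp [h]
  rw [Finset.sum_congr rfl h2, ← Finset.card_sigma]
  refine Finset.card_bij (fun p _ => (p.2, p.1 \ p.2)) ?_ ?_ ?_
  · rintro ⟨I, A⟩ h
    simp only [Finset.mem_sigma, Finset.mem_powerset, Finset.mem_filter] at h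
    obtain ⟨hI, hA, e1, e2, e3⟩ := h
    refine mem_N3.2 ⟨⟨hA.trans hI, Finset.sdiff_subset.trans hI⟩, Finset.disjoint_sdiff,
      e1, e2, ?_⟩
    rwa [Finset.union_sdiff_of_subset hA]
  · rintro ⟨I, A⟩ h ⟨I', A'⟩ h' e
    simp only [Finset.mem_sigma, Finset.mem_powerset, Finset.mem_filter] at h h'
    simp only [Prod.mk.injEq] at e
    obtain ⟨rfl, e⟩ := e
    have : I = I' := by
      rw [← Finset.union_sdiff_of_subset h.2.1, e, Finset.union_sdiff_of_subset h'.2.1]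
    rw [this]
  · rintro ⟨A, B⟩ h
    obtain ⟨⟨hA, hB⟩, hd, e1, e2, e3⟩ := mem_N3.1 h
    have e : (A ∪ B) \ A = B := by
      rw [Finset.union_sdiff_left, Finset.sdiff_eq_self_of_disjoint hd.symm]
    refine ⟨⟨A ∪ B, A⟩, ?_, ?_⟩
    · simp only [Finset.mem_sigma, Finset.mem_powerset, Finset.mem_filter]
      exact ⟨Finset.union_subset hA hB, Finset.subset_union_left, e1, by rwa [e], e3⟩
    · simp only [e]

lemma Ncount_zero_of_not_ROT (U T V : OT) (h : ¬ ROT U) : Ncount U T V = 0 := by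
  rw [Ncount, Finset.card_eq_zero, Finset.eq_empty_iff_forall_notMem]
  intro I hI
  obtain ⟨_, rfl, _⟩ := mem_NFinset.1 hI
  exact h (contractO_reduced V I)

open Classical in
lemma shuffle3_apply (K : Type) [Field K] (R S T V : OT) :
    shuffleF K (shuffleM K R S) (Finsupp.single T 1) V =
      if ROT V then ((N3 R S T V).card : K) else 0 := by
  have h1 : shuffleF K (shuffleM K R S) (Finsupp.single T 1) =
      (shuffleM K R S).sum fun U a => a • shuffleM K U T := by
    unfold shuffleF
    refine Finsupp.sum_congr fun U _ => ?_
    rw [Finsupp.sum_single_index] <;> simp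
  let F := (shuffleM K R S).support ∪
    (Finset.range (degO V)).powerset.image (contractO V)
  rw [h1, Finsupp.sum_of_support_subset (s := F) _ Finset.subset_union_left _ (by simp),
    Finsupp.finsetSum_apply]
  simp only [Finsupp.smul_apply, smul_eq_mul, shuffleM_apply]
  split_ifs with hV
  · rw [← sum_N R S T V F]
    · push_cast
      refine Finset.sum_congr rfl fun U _ => ?_
      by_cases hU : ROT U
      · simp [hU]
      · simp [hU, Ncount_zero_of_not_ROT U T V hU]
    · intro I hI
      exact Finset.mem_union_right _ (Finset.mem_image_of_mem _ (Finset.mem_powerset.2 hI))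
  · simp

lemma shuffle_assoc (K : Type) [Field K] (f g h : AMod K) :
    shuffleF K (shuffleF K f g) h = shuffleF K f (shuffleF K g h) := by
  induction f using Finsupp.induction_linear with
  | zero => simp [shuffleF_zero_left]
  | add f f' hf hf' => simp only [shuffleF_add_left, hf, hf']
  | single R a =>
  induction g using Finsupp.induction_linear with
  | zero => simp [shuffleF_zero_left, shuffleF_zero_right]
  | add f f' hf hf' => simp only [shuffleF_add_left, shuffleF_add_right, hf, hf']
  | single S b =>
  induction h using Finsupp.induction_linear with
  | zero => simp [shuffleF_zero_right]
  | add f f' hf hf' => simp only [shuffleF_add_right, hf, hf']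
  | single T c =>
  have e1 : ∀ (U : OT) (d : K), Finsupp.single U d = d • Finsupp.single U (1 : K) := by
    intro U d; simp
  rw [e1 R a, e1 S b, e1 T c]
  simp only [shuffleF_smul_left, shuffleF_smul_right, shuffleF_single, mul_one, one_smul]
  rw [shuffleF_comm K (Finsupp.single R 1)]
  congr 1
  have : shuffleF K (shuffleM K R S) (Finsupp.single T 1) =
      shuffleF K (shuffleM K S T) (Finsupp.single R 1) := by
    ext V
    rw [shuffle3_apply, shuffle3_apply, N3_card]
  rw [this, smul_comm]

/-- The `K`-bilinear extension of the planar shuffle product makes the free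
`K`-module on `PRT'` into a commutative, associative, unital `K`-algebra whose unit is the
empty tree `1` (i.e. `1 ⧢ f = f` for all `f`). -/
theorem shuffle_algebra (K : Type) [Field K] :
    (∀ f g : AMod K, suppRed K f → suppRed K g →
        shuffleF K f g = shuffleF K g f) ∧
      (∀ f g h : AMod K, suppRed K f → suppRed K g → suppRed K h →
        shuffleF K (shuffleF K f g) h = shuffleF K f (shuffleF K g h)) ∧
      (∀ f : AMod K, suppRed K f →
        shuffleF K (Finsupp.single (none : OT) 1) f = f) ∧
      (∀ (a : K) (f f' g : AMod K), suppRed K f → suppRed K f' → suppRed K g →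
        shuffleF K (a • f + f') g = a • shuffleF K f g + shuffleF K f' g) ∧
      (∀ (a : K) (f g g' : AMod K), suppRed K f → suppRed K g → suppRed K g' →
        shuffleF K f (a • g + g') = a • shuffleF K f g + shuffleF K f g') := by
  refine ⟨fun f g _ _ => shuffleF_comm K f g, fun f g h _ _ _ => shuffle_assoc K f g h, ?_,
    fun a f f' g _ _ _ => ?_, fun a f g g' _ _ _ => ?_⟩
  · intro f hf
    unfold shuffleF
    rw [Finsupp.sum_single_index (by simp)]
    conv_rhs => rw [← Finsupp.sum_single f]
    refine Finsupp.sum_congr fun T hT => ?_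
    rw [shuffleM_none K T (hf T hT)]
    simp
  · rw [shuffleF_add_left, shuffleF_smul_left]
  · rw [shuffleF_add_right, shuffleF_smul_right]
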